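/- The Steiner triple system of order 19 on Z_19 obtained by developing the base blocks {0,1,6}, {0,2,10}, {0,3,7} modulo 19 is nonsequenceable. -/

import Mathlib

/-- `B` is (the block set of) a partial Steiner triple system on the point set `X`:
every block has 3 points and every pair of distinct points lies in at most one block. -/
def isPSTS {X : Type*} [DecidableEq X] (B : Finset (Finset X)) : Prop :=
  (∀ b ∈ B, b.card = 3) ∧
  ∀ p q : X, p ≠ q → (B.filter (fun b => p ∈ b ∧ q ∈ b)).card ≤ 1

/-- `B` is (the block set of) a Steiner triple system on the point set `X`:
every block has 3 points and every pair of distinct points lies in exactly one block. -/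
def isSTS {X : Type*} [DecidableEq X] (B : Finset (Finset X)) : Prop :=
  (∀ b ∈ B, b.card = 3) ∧
  ∀ p q : X, p ≠ q → (B.filter (fun b => p ∈ b ∧ q ∈ b)).card = 1

/-- The finset `S` can be partitioned into blocks of `B`. -/
def blocksPartition {X : Type*} [DecidableEq X] (B : Finset (Finset X)) (S : Finset X) : Prop :=
  ∃ P : Finset (Finset X), P ⊆ B ∧
    (∀ b₁ ∈ P, ∀ b₂ ∈ P, b₁ ≠ b₂ → Disjoint b₁ b₂) ∧ P.biUnion id = S

/-- `A` is an almost parallel class of `B`: a set of pairwise disjoint blocks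
covering all points of `X` except exactly one. -/
def isAPC {X : Type*} [DecidableEq X] [Fintype X] (B A : Finset (Finset X)) : Prop :=
  A ⊆ B ∧ (∀ b₁ ∈ A, ∀ b₂ ∈ A, b₁ ≠ b₂ → Disjoint b₁ b₂) ∧
    ∃ y : X, A.biUnion id = Finset.univ.erase y

/-- `B` is sequenceable: there is a sequencing of the points (a bijection from
`Fin n` to `X`) such that no proper segment can be partitioned into blocks of `B`. -/
def sequenceable {X : Type*} [DecidableEq X] [Fintype X] (B : Finset (Finset X)) : Prop :=
  ∃ f : Fin (Fintype.card X) ≃ X,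
    ∀ i j : Fin (Fintype.card X), i ≤ j →
      ¬((i : ℕ) = 0 ∧ (j : ℕ) = Fintype.card X - 1) →
      ¬ blocksPartition B ((Finset.Icc i j).image f)

/-- The blocks obtained by developing the base blocks modulo 19. -/
def dev19 : Finset (Finset (ZMod 19)) :=
  Finset.univ.biUnion fun t : ZMod 19 =>
    ({{0,1,6}, {0,2,10}, {0,3,7}} : Finset (Finset (ZMod 19))).image (fun b => b.image (· + t))

def apc19 : Finset (Finset (ZMod 19)) :=
  {{1, 14, 15}, {2, 3, 8}, {4, 5, 10}, {6, 9, 13}, {7, 16, 18}, {11, 12, 17}}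

theorem apc19_sub : ∀ b ∈ apc19, ∃ c ∈ ({{0,1,6}, {0,2,10}, {0,3,7}} : Finset (Finset (ZMod 19))),
    ∃ t : ZMod 19, c.image (· + t) = b := by
  intro b hb
  simp only [apc19, Finset.mem_insert, Finset.mem_singleton] at hb
  rcases hb with rfl | rfl | rfl | rfl | rfl | rfl
  · exact ⟨{0, 1, 6}, by simp, 14, by decide +kernel⟩
  · exact ⟨{0, 1, 6}, by simp, 2, by decide +kernel⟩
  · exact ⟨{0, 1, 6}, by simp, 4, by decide +kernel⟩
  · exact ⟨{0, 3, 7}, by simp, 6, by decide +kernel⟩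
  · exact ⟨{0, 2, 10}, by simp, 16, by decide +kernel⟩
  · exact ⟨{0, 1, 6}, by simp, 11, by decide +kernel⟩

theorem apc19_disj : ∀ b₁ ∈ apc19, ∀ b₂ ∈ apc19, b₁ ≠ b₂ → Disjoint b₁ b₂ := by
  intro b₁ h₁ b₂ h₂ hne
  simp only [apc19, Finset.mem_insert, Finset.mem_singleton] at h₁ h₂
  rcases h₁ with rfl | rfl | rfl | rfl | rfl | rfl <;>
    rcases h₂ with rfl | rfl | rfl | rfl | rfl | rfl <;>
    first
    | exact absurd rfl hne
    | (clear hne; decide +kernel)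

set_option maxRecDepth 100000 in
theorem apc19_cover : apc19.biUnion id = Finset.univ.erase 0 := by decide +kernel

theorem part19 (y : ZMod 19) : blocksPartition dev19 (Finset.univ.erase y) := by
  refine ⟨apc19.image (fun b => b.image (· + y)), ?_, ?_, ?_⟩
  · intro d hd
    obtain ⟨b, hb, rfl⟩ := Finset.mem_image.1 hd
    obtain ⟨c, hc, t, rfl⟩ := apc19_sub b hb
    refine Finset.mem_biUnion.2 ⟨t + y, Finset.mem_univ _, Finset.mem_image.2 ⟨c, hc, ?_⟩⟩
    rw [Finset.image_image]
    congr 1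
    funext x
    simp [add_assoc]
  · intro d₁ h₁ d₂ h₂ hne
    obtain ⟨b₁, hb₁, rfl⟩ := Finset.mem_image.1 h₁
    obtain ⟨b₂, hb₂, rfl⟩ := Finset.mem_image.1 h₂
    have h : b₁ ≠ b₂ := fun h => hne (by rw [h])
    exact (Finset.disjoint_image (add_left_injective y)).2 (apc19_disj b₁ hb₁ b₂ hb₂ h)
  · ext x
    have h : (x - y) ∈ apc19.biUnion id ↔ x - y ∈ Finset.univ.erase (0 : ZMod 19) := by
      rw [apc19_cover]
    simp only [Finset.mem_biUnion, id, Finset.mem_erase, Finset.mem_univ, and_true,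
      sub_ne_zero] at h
    simp only [Finset.mem_biUnion, id, Finset.mem_erase, Finset.mem_univ, and_true, ← h]
    constructor
    · rintro ⟨d, hd, hx⟩
      obtain ⟨b, hb, rfl⟩ := Finset.mem_image.1 hd
      obtain ⟨z, hz, rfl⟩ := Finset.mem_image.1 hx
      exact ⟨b, hb, by simpa using hz⟩
    · rintro ⟨b, hb, hx⟩
      exact ⟨_, Finset.mem_image_of_mem _ hb, Finset.mem_image.2 ⟨_, hx, by simp⟩⟩

theorem stmt6 : ¬ sequenceable dev19 := by
  rintro ⟨f, hf⟩
  have hc : Fintype.card (ZMod 19) = 19 := ZMod.card 19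
  refine hf ⟨1, by omega⟩ ⟨18, by omega⟩ (by simp [Fin.le_def]) (by simp) ?_
  convert part19 (f ⟨0, by omega⟩) using 1
  ext x
  obtain ⟨i, rfl⟩ := f.surjective x
  have := i.2
  simp only [Finset.mem_image, Finset.mem_Icc, Fin.le_def, EmbeddingLike.apply_eq_iff_eq,
    Finset.mem_erase, Finset.mem_univ, and_true, ne_eq, Fin.ext_iff]
  constructor
  · rintro ⟨a, ha, hai⟩
    omega
  · intro h
    exact ⟨i, by omega, rfl⟩
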